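/- The 6×6 integer matrix Q_{E6*} is positive definite with det Q_{E6*} = 243 and inhomogeneous minimum μ(Q_{E6*}) = 2; consequently its covering density is Θ(Q_{E6*}) = (8/(9·√3)) · κ_6, i.e. μ(Q_{E6*})^6 / det Q_{E6*} = 64/243. -/

import Mathlib

/-!
The quadratic form `QE6` is twice the norm form of the lattice
`Λ = {u ∈ E³ : u₁ + u₂ + u₃ ≡ 0 mod √-3}`, where `E = ℤ[e^{iπ/3}]` is the ring of Eisenstein
integers (`QE6_form`). Positive definiteness is immediate from this, and the inhomogeneous minimum
is `2` as soon as the covering radius of `Λ` in `ℂ³` is `1`.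

* Lower bound (`QE6_deep_hole`): the point `(1, 0, 0) ∈ E³ \ Λ` differs from every lattice point
  by a nonzero element of `E³`, whose norm is a positive integer.
* Upper bound (`QE6_covering`): each coordinate of `z ∈ ℂ³` lies in a triangle of side `1` with
  vertices in `E`, one in each residue class modulo `√-3`. With barycentric coordinates `p, q, r`
  the squared distance to the vertex of weight `p` is `1 - p - (pq + qr + rp)`. Let `p` be the
  largest weight, `a = p - q` and `b = p - r`; then the three squared distances are `d`, `d + a`,
  `d + b` with `d = (1 - gap a b) / 3` (`exists_sorted`). If the three nearest vertices have
  residues summing to `0` they give a lattice point at squared distance at most `1`. Otherwise the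
  sum is corrected either by moving one coordinate to a second vertex, at cost some `aᵢ`, or by
  moving two coordinates to their third vertices, at cost some `bᵢ + bⱼ` (or the same with `a` and
  `b` exchanged). One of these six costs is at most `∑ gap aᵢ bᵢ / 3` (`exists_choice`), which
  is exactly what squared distance `≤ 1` requires.
-/

open Matrix MeasureTheory

/-- The inhomogeneous minimum `μ(Q) = sup_x inf_{v ∈ ℤᵈ} Q[x - v]` of a quadratic form. -/
noncomputable def inhomMin {d : ℕ} (Q : Matrix (Fin d) (Fin d) ℝ) : ℝ :=
  ⨆ x : Fin d → ℝ, ⨅ v : Fin d → ℤ,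
    (x - fun i => (v i : ℝ)) ⬝ᵥ (Q *ᵥ (x - fun i => (v i : ℝ)))

/-- The homogeneous minimum `λ(Q) = min_{v ∈ ℤᵈ, v ≠ 0} Q[v]` of a quadratic form. -/
noncomputable def homMin {d : ℕ} (Q : Matrix (Fin d) (Fin d) ℝ) : ℝ :=
  ⨅ v : {w : Fin d → ℤ // w ≠ 0},
    (fun i => (v.1 i : ℝ)) ⬝ᵥ (Q *ᵥ fun i => (v.1 i : ℝ))

/-- `κ_d`, the Lebesgue volume of the `d`-dimensional Euclidean unit ball. -/
noncomputable def unitBallVol (d : ℕ) : ℝ :=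
  (volume (Metric.ball (0 : EuclideanSpace ℝ (Fin d)) 1)).toReal

/-- The covering density `Θ(Q) = √(μ(Q)^d / det Q) · κ_d`. -/
noncomputable def covDensity {d : ℕ} (Q : Matrix (Fin d) (Fin d) ℝ) : ℝ :=
  Real.sqrt (inhomMin Q ^ d / Q.det) * unitBallVol d

/-- The Gram matrix `Q_{E6*}` of (a rescaling of) the lattice `E₆*`. -/
def QE6 : Matrix (Fin 6) (Fin 6) ℝ :=
  !![4, 1, 2, 2, -1, 1;
     1, 4, 2, 2, 2, 1;
     2, 2, 4, 1, 1, 2;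
     2, 2, 1, 4, 1, 2;
     -1, 2, 1, 1, 4, 2;
     1, 1, 2, 2, 2, 4]


/-! ### The form as an Eisenstein norm -/

/-- The norm `|x + y e^{iπ/3}|²` on `ℂ`, in coordinates with respect to the basis `1, e^{iπ/3}`. -/
def eNorm (x y : ℝ) : ℝ := x ^ 2 + x * y + y ^ 2

/-- The form `QE6` is isometric to `2(|u₁|² + |u₂|² + |u₃|²)` on `ℂ³`. The change of coordinates
carries `ℤ⁶` onto the Eisenstein vectors with `u₁ + u₂ + u₃ ≡ 0 mod √-3`. -/
lemma QE6_form (x : Fin 6 → ℝ) :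
    x ⬝ᵥ (QE6 *ᵥ x) = 2 * (eNorm (-(x 0 + x 1 + x 2 + x 3 + x 4 + x 5)) (x 4)
      + eNorm (-x 0 + x 4 + x 5) (x 0 - x 1 - x 4) + eNorm (-x 2) (x 2 - x 3)) := by
  simp [QE6, eNorm, Matrix.mulVec, dotProduct, Fin.sum_univ_succ]
  ring

lemma QE6_det : QE6.det = 243 := by
  simp [QE6, Matrix.det_succ_row_zero, Fin.sum_univ_succ, Fin.succAbove]
  norm_num

lemma eNorm_nonneg (x y : ℝ) : 0 ≤ eNorm x y := by
  unfold eNorm; nlinarith [sq_nonneg (x + y), sq_nonneg x, sq_nonneg y]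

lemma eNorm_eq_zero {x y : ℝ} (h : eNorm x y ≤ 0) : x = 0 ∧ y = 0 := by
  unfold eNorm at h
  constructor <;> apply pow_eq_zero_iff (two_ne_zero) |>.1 <;>
    nlinarith [sq_nonneg (x + y), sq_nonneg x, sq_nonneg y]

lemma QE6_posDef : QE6.PosDef := by
  refine Matrix.PosDef.of_dotProduct_mulVec_pos ?_ ?_
  · ext i j
    fin_cases i <;> fin_cases j <;> simp [QE6]
  · intro x hx
    rw [star_trivial, QE6_form]
    by_contra! h
    have h1 := eNorm_nonneg (-(x 0 + x 1 + x 2 + x 3 + x 4 + x 5)) (x 4)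
    have h2 := eNorm_nonneg (-x 0 + x 4 + x 5) (x 0 - x 1 - x 4)
    have h3 := eNorm_nonneg (-x 2) (x 2 - x 3)
    obtain ⟨a1, b1⟩ := eNorm_eq_zero (by linarith : eNorm (-(x 0 + x 1 + x 2 + x 3 + x 4 + x 5)) (x 4) ≤ 0)
    obtain ⟨a2, b2⟩ := eNorm_eq_zero (by linarith : eNorm (-x 0 + x 4 + x 5) (x 0 - x 1 - x 4) ≤ 0)
    obtain ⟨a3, b3⟩ := eNorm_eq_zero (by linarith : eNorm (-x 2) (x 2 - x 3) ≤ 0)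
    apply hx
    ext i
    fin_cases i <;> simp <;> linarith

/-! ### Distances to Eisenstein integers in the three residue classes -/

/-- `Near x y r d`: some Eisenstein integer of residue `r` modulo `√-3` lies at squared distance
`d` from the point `x + y e^{iπ/3}`. The residue field is identified with `ZMod 3` through
`m + n e^{iπ/3} ↦ m - n`, since `e^{iπ/3} ≡ -1`. -/
def Near (x y : ℝ) (r : ZMod 3) (d : ℝ) : Prop :=
  ∃ m n : ℤ, ((m - n : ℤ) : ZMod 3) = r ∧ eNorm (x - m) (y - n) = d

/-- A point of the plane lies in a unit triangle with Eisenstein vertices; the three vertices have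
distinct residues, and `p, q, r` are the barycentric coordinates. -/
lemma exists_triangle (x y : ℝ) : ∃ (c : ZMod 3) (p q r : ℝ), 0 ≤ p ∧ 0 ≤ q ∧ 0 ≤ r ∧
    p + q + r = 1 ∧ Near x y c (1 - p - (p * q + q * r + r * p)) ∧
    Near x y (c + 1) (1 - q - (p * q + q * r + r * p)) ∧
    Near x y (c + 2) (1 - r - (p * q + q * r + r * p)) := by
  obtain ⟨m, s, hs0, hs1, rfl⟩ : ∃ (m : ℤ) (s : ℝ), 0 ≤ s ∧ s < 1 ∧ x = m + s :=
    ⟨⌊x⌋, Int.fract x, Int.fract_nonneg x, Int.fract_lt_one x, (Int.floor_add_fract x).symm⟩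
  obtain ⟨n, t, ht0, ht1, rfl⟩ : ∃ (n : ℤ) (t : ℝ), 0 ≤ t ∧ t < 1 ∧ y = n + t :=
    ⟨⌊y⌋, Int.fract y, Int.fract_nonneg y, Int.fract_lt_one y, (Int.floor_add_fract y).symm⟩
  have h3 : (2 : ZMod 3) = -1 := by decide
  have N : ∀ (i j : ℤ) (r : ZMod 3) (d : ℝ), ((m - n : ℤ) : ZMod 3) + ((i - j : ℤ) : ZMod 3) = r →
      eNorm (s - i) (t - j) = d → Near (m + s) (n + t) r d := by
    intro i j r d hr hd
    refine ⟨m + i, n + j, ?_, ?_⟩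
    · rw [← hr]; push_cast; ring
    · rw [← hd]; push_cast; congr 1 <;> ring
  -- The diagonal `s + t = 1` cuts the fundamental parallelogram into two unit triangles.
  rcases le_total (s + t) 1 with h | h
  · refine ⟨((m - n : ℤ) : ZMod 3), 1 - s - t, s, t, by linarith, hs0, ht0, by ring,
      N 0 0 _ _ (by simp) ?_, N 1 0 _ _ (by simp) ?_, N 0 1 _ _ (by simp [h3]) ?_⟩ <;>
    · simp only [eNorm]; push_cast; ring
  · refine ⟨((m - n : ℤ) : ZMod 3), s + t - 1, 1 - t, 1 - s, by linarith, by linarith, by linarith,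
      by ring, N 1 1 _ _ (by simp) ?_, N 1 0 _ _ (by simp) ?_, N 0 1 _ _ (by simp [h3]) ?_⟩ <;>
    · simp only [eNorm]; push_cast; ring

/-- With barycentric coordinates of maximum `p` and `a`, `b` the amounts by which the two others
fall short of it, `1 - gap a b` is three times the squared distance to the nearest vertex. -/
def gap (a b : ℝ) : ℝ := a + b - a ^ 2 - b ^ 2 + a * b

/-- The triangle of `exists_triangle`, rotated so that the vertex of residue `c` has the largest
weight. The inequalities `2a ≤ 1 + b` and `2b ≤ 1 + a` say that the other weights are nonnegative. -/
lemma exists_sorted (x y : ℝ) : ∃ (c : ZMod 3) (a b : ℝ), 0 ≤ a ∧ 0 ≤ b ∧ 2 * a ≤ 1 + b ∧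
    2 * b ≤ 1 + a ∧ Near x y c ((1 - gap a b) / 3) ∧
    Near x y (c + 1) ((1 - gap a b) / 3 + a) ∧ Near x y (c + 2) ((1 - gap a b) / 3 + b) := by
  obtain ⟨c, p, q, r, hp, hq, hr, h, h0, h1, h2⟩ := exists_triangle x y
  have h3 : (3 : ZMod 3) = 0 := by decide
  have aux : ∀ (c : ZMod 3) (p q r : ℝ), 0 ≤ q → 0 ≤ r → p + q + r = 1 → q ≤ p → r ≤ p →
      Near x y c (1 - p - (p * q + q * r + r * p)) →
      Near x y (c + 1) (1 - q - (p * q + q * r + r * p)) →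
      Near x y (c + 2) (1 - r - (p * q + q * r + r * p)) →
      ∃ (c : ZMod 3) (a b : ℝ), 0 ≤ a ∧ 0 ≤ b ∧ 2 * a ≤ 1 + b ∧
      2 * b ≤ 1 + a ∧ Near x y c ((1 - gap a b) / 3) ∧
      Near x y (c + 1) ((1 - gap a b) / 3 + a) ∧ Near x y (c + 2) ((1 - gap a b) / 3 + b) := by
    intro c p q r hq hr h hqp hrp h0 h1 h2
    have e : (1 - gap (p - q) (p - r)) / 3 = 1 - p - (p * q + q * r + r * p) := by
      obtain rfl : p = 1 - q - r := by linarith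
      unfold gap; ring
    refine ⟨c, p - q, p - r, by linarith, by linarith, by linarith, by linarith, ?_, ?_, ?_⟩ <;>
      rw [e]
    · exact h0
    · convert h1 using 1; ring
    · convert h2 using 1; ring
  have case_q : r ≤ q → p ≤ q → _ := fun hrq hpq =>
    aux (c + 1) q r p hr hp (by linarith) hrq hpq
      (by convert h1 using 1; ring)
      (by convert h2 using 1 <;> ring)
      (by convert h0 using 1
          · linear_combination h3
          · ring)
  have case_r : p ≤ r → q ≤ r → _ := fun hpr hqr =>
    aux (c + 2) r p q hp hq (by linarith) hpr hqr
      (by convert h2 using 1; ring)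
      (by convert h0 using 1
          · linear_combination h3
          · ring)
      (by convert h1 using 1
          · linear_combination h3
          · ring)
  rcases le_total q p with hqp | hqp
  · rcases le_total r p with hrp | hrp
    · exact aux c p q r hq hr h hqp hrp h0 h1 h2
    · exact case_r hrp (hqp.trans hrp)
  · rcases le_total r q with hrq | hrq
    · exact case_q hrq hqp
    · exact case_r (hqp.trans hrq) hrq

/-! ### The inequality behind the covering -/

/-- `gap` is monotone in each variable on the region `2a ≤ 1 + b`, `2b ≤ 1 + a`, so `a` may be
lowered to `m` and `b` to `min b m`. -/
lemma gap_ge {m a b : ℝ} (hma : m ≤ a) (hab : 2 * a ≤ 1 + b)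
    (hba : 2 * b ≤ 1 + a) : gap m (min b m) ≤ gap a b := by
  unfold gap
  rcases le_total b m with h | h
  · rw [min_eq_left h]
    nlinarith [mul_nonneg (sub_nonneg.2 hma) (by linarith : 0 ≤ 1 - (a + m) + b)]
  · rw [min_eq_right h]
    rcases le_total a b with h' | h'
    · nlinarith [mul_nonneg (sub_nonneg.2 h') (by linarith : 0 ≤ 1 - b),
        mul_nonneg (sub_nonneg.2 hma) (by linarith : 0 ≤ 2 - a - m)]
    · nlinarith [mul_nonneg (sub_nonneg.2 h') (by linarith : 0 ≤ 1 - a),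
        mul_nonneg (sub_nonneg.2 h) (by linarith : 0 ≤ 2 - b - m)]

lemma le_gap {m b : ℝ} (hb : m ≤ 2 * b) (hbm : b ≤ m) (hm : 2 * m ≤ 1 + b) : m ≤ gap m b := by
  unfold gap
  rcases le_total b (1 / 3) with h | h
  · nlinarith [mul_nonneg (sub_nonneg.2 hb) (sub_nonneg.2 hbm), mul_nonneg (by linarith : 0 ≤ b) (sub_nonneg.2 h)]
  · nlinarith [mul_nonneg (sub_nonneg.2 hm) (sub_nonneg.2 hbm), mul_nonneg (by linarith : 0 ≤ 1 - b) (sub_nonneg.2 h)]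

lemma gap_mono {m b c : ℝ} (h : b ≤ c) (hc : c ≤ m) (hm : m ≤ 1) : gap m b ≤ gap m c := by
  unfold gap
  nlinarith [mul_nonneg (sub_nonneg.2 h) (by linarith : 0 ≤ 1 + m - b - c)]

/-- The case of `sum_gap_ge` in which some `b` is below `m / 2`: the other two are then at least
`m - b₁`, and at `b₂ = b₃ = m - b₁` the claim is a concave inequality in `b₁ ∈ [0, m / 2]`. -/
lemma sum_gap_aux {m b₁ b₂ b₃ : ℝ} (hb : 0 ≤ b₁) (hbm : 2 * b₁ ≤ m) (hm : 2 * m ≤ 1 + b₁)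
    (h2 : b₂ ≤ m) (h3 : b₃ ≤ m) (h12 : m ≤ b₁ + b₂) (h13 : m ≤ b₁ + b₃) :
    3 * m ≤ gap m b₁ + gap m b₂ + gap m b₃ := by
  have e2 := gap_mono (by linarith : m - b₁ ≤ b₂) h2 (by linarith)
  have e3 := gap_mono (by linarith : m - b₁ ≤ b₃) h3 (by linarith)
  have : 3 * m ≤ gap m b₁ + 2 * gap m (m - b₁) := by
    unfold gap
    nlinarith [mul_nonneg hb (sub_nonneg.2 hbm), mul_nonneg (by linarith : 0 ≤ m) (by linarith : 0 ≤ 2 - 3 * m)]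
  linarith

/-- If `m` bounds all six correction costs from below, then `3m` is at most the sum of the gaps.
After `gap_ge` everything depends on `m` and the truncations `min bᵢ m` only. -/
lemma sum_gap_ge {m a₁ b₁ a₂ b₂ a₃ b₃ : ℝ} (hm : 0 ≤ m) (hb₁ : 0 ≤ b₁) (hb₂ : 0 ≤ b₂)
    (hb₃ : 0 ≤ b₃) (h₁ : 2 * a₁ ≤ 1 + b₁) (h₁' : 2 * b₁ ≤ 1 + a₁) (h₂ : 2 * a₂ ≤ 1 + b₂)
    (h₂' : 2 * b₂ ≤ 1 + a₂) (h₃ : 2 * a₃ ≤ 1 + b₃) (h₃' : 2 * b₃ ≤ 1 + a₃)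
    (ha₁ : m ≤ a₁) (ha₂ : m ≤ a₂) (ha₃ : m ≤ a₃) (h12 : m ≤ b₁ + b₂) (h13 : m ≤ b₁ + b₃)
    (h23 : m ≤ b₂ + b₃) : 3 * m ≤ gap a₁ b₁ + gap a₂ b₂ + gap a₃ b₃ := by
  have g₁ := gap_ge ha₁ h₁ h₁'
  have g₂ := gap_ge ha₂ h₂ h₂'
  have g₃ := gap_ge ha₃ h₃ h₃'
  have key : ∀ b c : ℝ, 0 ≤ b → 0 ≤ c → m ≤ b + c → m ≤ min b m + min c m := by
    intro b c hb hc h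
    rcases min_cases b m with ⟨h, _⟩ | ⟨h, _⟩ <;> rcases min_cases c m with ⟨h', _⟩ | ⟨h', _⟩ <;>
      rw [h, h'] <;> linarith
  have k12 := key _ _ hb₁ hb₂ h12
  have k13 := key _ _ hb₁ hb₃ h13
  have k23 := key _ _ hb₂ hb₃ h23
  have key2 : ∀ a b : ℝ, 2 * a ≤ 1 + b → 2 * b ≤ 1 + a → m ≤ a → 2 * m ≤ 1 + min b m := by
    intro a b _ _ _
    rcases min_cases b m with ⟨h, _⟩ | ⟨h, _⟩ <;> rw [h] <;> linarith
  have l₁ := key2 _ _ h₁ h₁' ha₁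
  have l₂ := key2 _ _ h₂ h₂' ha₂
  have l₃ := key2 _ _ h₃ h₃' ha₃
  have n₁ : 0 ≤ min b₁ m := le_min hb₁ hm
  have n₂ : 0 ≤ min b₂ m := le_min hb₂ hm
  have n₃ : 0 ≤ min b₃ m := le_min hb₃ hm
  have u₁ := min_le_right b₁ m
  have u₂ := min_le_right b₂ m
  have u₃ := min_le_right b₃ m
  rcases le_total (2 * min b₁ m) m with c₁ | c₁
  · linarith [sum_gap_aux n₁ c₁ l₁ u₂ u₃ k12 k13]
  rcases le_total (2 * min b₂ m) m with c₂ | c₂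
  · linarith [sum_gap_aux n₂ c₂ l₂ u₁ u₃ (by linarith) k23]
  rcases le_total (2 * min b₃ m) m with c₃ | c₃
  · linarith [sum_gap_aux n₃ c₃ l₃ u₁ u₂ (by linarith) (by linarith)]
  linarith [le_gap c₁ u₁ l₁, le_gap c₂ u₂ l₂, le_gap c₃ u₃ l₃]

/-- One of the six ways of shifting the residue sum by a fixed nonzero class is cheap enough. -/
lemma exists_choice {a₁ b₁ a₂ b₂ a₃ b₃ : ℝ} (hc₁ : 0 ≤ a₁) (hc₂ : 0 ≤ a₂) (hc₃ : 0 ≤ a₃)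
    (hb₁ : 0 ≤ b₁) (hb₂ : 0 ≤ b₂)
    (hb₃ : 0 ≤ b₃) (h₁ : 2 * a₁ ≤ 1 + b₁) (h₁' : 2 * b₁ ≤ 1 + a₁) (h₂ : 2 * a₂ ≤ 1 + b₂)
    (h₂' : 2 * b₂ ≤ 1 + a₂) (h₃ : 2 * a₃ ≤ 1 + b₃) (h₃' : 2 * b₃ ≤ 1 + a₃) :
    ∃ s ∈ [a₁, a₂, a₃, b₁ + b₂, b₁ + b₃, b₂ + b₃],
      s ≤ (gap a₁ b₁ + gap a₂ b₂ + gap a₃ b₃) / 3 := by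
  by_contra! H
  simp only [List.forall_mem_cons] at H
  obtain ⟨k1, k2, k3, k4, k5, k6, -⟩ := H
  obtain ⟨m, hm, hmR, i1, i2, i3, i4, i5, i6⟩ : ∃ m, 0 ≤ m ∧
      (gap a₁ b₁ + gap a₂ b₂ + gap a₃ b₃) / 3 < m ∧ m ≤ a₁ ∧ m ≤ a₂ ∧ m ≤ a₃ ∧ m ≤ b₁ + b₂ ∧
      m ≤ b₁ + b₃ ∧ m ≤ b₂ + b₃ := by
    refine ⟨min a₁ (min a₂ (min a₃ (min (b₁ + b₂) (min (b₁ + b₃) (b₂ + b₃))))), ?_, ?_, ?_⟩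
    · simp only [le_min_iff]
      refine ⟨hc₁, hc₂, hc₃, ?_, ?_, ?_⟩ <;> linarith
    · simp only [lt_min_iff]
      exact ⟨k1, k2, k3, k4, k5, k6⟩
    · simp only [← le_min_iff]
      exact le_rfl
  linarith [sum_gap_ge hm hb₁ hb₂ hb₃ h₁ h₁' h₂ h₂' h₃ h₃' i1 i2 i3 i4 i5 i6]

/-! ### Covering radius and conclusion -/

/-- Every point of `ℂ³` is within squared distance `1` of an Eisenstein vector whose residues sum
to `0`. -/
lemma exists_lattice_pt (x₁ y₁ x₂ y₂ x₃ y₃ : ℝ) : ∃ (r₁ r₂ r₃ : ZMod 3) (d₁ d₂ d₃ : ℝ),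
    r₁ + r₂ + r₃ = 0 ∧ d₁ + d₂ + d₃ ≤ 1 ∧
    Near x₁ y₁ r₁ d₁ ∧ Near x₂ y₂ r₂ d₂ ∧ Near x₃ y₃ r₃ d₃ := by
  obtain ⟨c₁, a₁, b₁, ha₁, hb₁, h₁, h₁', n₁, p₁, q₁⟩ := exists_sorted x₁ y₁
  obtain ⟨c₂, a₂, b₂, ha₂, hb₂, h₂, h₂', n₂, p₂, q₂⟩ := exists_sorted x₂ y₂
  obtain ⟨c₃, a₃, b₃, ha₃, hb₃, h₃, h₃', n₃, p₃, q₃⟩ := exists_sorted x₃ y₃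
  have h3 : (3 : ZMod 3) = 0 := by decide
  have hc : c₁ + c₂ + c₃ = 0 ∨ c₁ + c₂ + c₃ = 1 ∨ c₁ + c₂ + c₃ = 2 := by
    generalize c₁ + c₂ + c₃ = c
    revert c; decide
  rcases hc with hc | hc | hc
  · refine ⟨_, _, _, _, _, _, hc, ?_, n₁, n₂, n₃⟩
    -- With `m = 0` this says that the total gap is nonnegative.
    have := sum_gap_ge le_rfl hb₁ hb₂ hb₃ h₁ h₁' h₂ h₂' h₃ h₃' ha₁ ha₂ ha₃ (by linarith)
      (by linarith) (by linarith)
    linarith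
  · -- Shifting the sum by `-1` exchanges the roles of `a` and `b`.
    obtain ⟨s, hs, hR⟩ := exists_choice hb₁ hb₂ hb₃ ha₁ ha₂ ha₃ h₁' h₁ h₂' h₂ h₃' h₃
    have e : ∀ a b : ℝ, gap b a = gap a b := fun a b => by unfold gap; ring
    rw [e a₁, e a₂, e a₃] at hR
    simp only [List.mem_cons, List.not_mem_nil, or_false] at hs
    rcases hs with rfl | rfl | rfl | rfl | rfl | rfl
    · exact ⟨_, _, _, _, _, _, by linear_combination hc + h3, by linarith, q₁, n₂, n₃⟩
    · exact ⟨_, _, _, _, _, _, by linear_combination hc + h3, by linarith, n₁, q₂, n₃⟩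
    · exact ⟨_, _, _, _, _, _, by linear_combination hc + h3, by linarith, n₁, n₂, q₃⟩
    · exact ⟨_, _, _, _, _, _, by linear_combination hc + h3, by linarith, p₁, p₂, n₃⟩
    · exact ⟨_, _, _, _, _, _, by linear_combination hc + h3, by linarith, p₁, n₂, p₃⟩
    · exact ⟨_, _, _, _, _, _, by linear_combination hc + h3, by linarith, n₁, p₂, p₃⟩
  · obtain ⟨s, hs, hR⟩ := exists_choice ha₁ ha₂ ha₃ hb₁ hb₂ hb₃ h₁ h₁' h₂ h₂' h₃ h₃'
    simp only [List.mem_cons, List.not_mem_nil, or_false] at hs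
    rcases hs with rfl | rfl | rfl | rfl | rfl | rfl
    · exact ⟨_, _, _, _, _, _, by linear_combination hc + h3, by linarith, p₁, n₂, n₃⟩
    · exact ⟨_, _, _, _, _, _, by linear_combination hc + h3, by linarith, n₁, p₂, n₃⟩
    · exact ⟨_, _, _, _, _, _, by linear_combination hc + h3, by linarith, n₁, n₂, p₃⟩
    · exact ⟨_, _, _, _, _, _, by linear_combination hc + 2 * h3, by linarith, q₁, q₂, n₃⟩
    · exact ⟨_, _, _, _, _, _, by linear_combination hc + 2 * h3, by linarith, q₁, n₂, q₃⟩
    · exact ⟨_, _, _, _, _, _, by linear_combination hc + 2 * h3, by linarith, n₁, q₂, q₃⟩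

lemma QE6_covering (x : Fin 6 → ℝ) : ∃ v : Fin 6 → ℤ,
    (x - fun i => (v i : ℝ)) ⬝ᵥ (QE6 *ᵥ (x - fun i => (v i : ℝ))) ≤ 2 := by
  obtain ⟨r₁, r₂, r₃, d₁, d₂, d₃, hr, hd, ⟨m₁, n₁, e₁, f₁⟩, ⟨m₂, n₂, e₂, f₂⟩, ⟨m₃, n₃, e₃, f₃⟩⟩ :=
    exists_lattice_pt (-(x 0 + x 1 + x 2 + x 3 + x 4 + x 5)) (x 4)
      (-x 0 + x 4 + x 5) (x 0 - x 1 - x 4) (-x 2) (x 2 - x 3)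
  have hk : (((m₁ - n₁) + (m₂ - n₂) + (m₃ - n₃) : ℤ) : ZMod 3) = 0 := by
    rw [← hr, ← e₁, ← e₂, ← e₃]; push_cast; ring
  obtain ⟨k, hk⟩ := (ZMod.intCast_zmod_eq_zero_iff_dvd _ 3).1 hk
  obtain rfl : m₁ = 3 * k + n₁ - m₂ + n₂ - m₃ + n₃ := by push_cast at hk; linarith
  -- The inverse of the coordinate change in `QE6_form`, with `m₁` eliminated in favour of `k`.
  refine ⟨![-k + m₃, -k - n₁ - n₂ + m₃, -m₃, -m₃ - n₃, n₁, -k - n₁ + m₂ + m₃], ?_⟩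
  rw [QE6_form]
  rw [← f₁, ← f₂, ← f₃] at hd
  refine le_trans (le_of_eq ?_) (mul_le_mul_of_nonneg_left hd zero_le_two |>.trans_eq (mul_one 2))
  simp [eNorm]
  ring

/-- In Eisenstein coordinates the chosen point is `(1, 0, 0)`, an element of `E³` outside the
lattice, so all its squared distances to lattice points are positive integers, doubled. -/
lemma QE6_deep_hole (v : Fin 6 → ℤ) :
    2 ≤ ((![-1/3, -1/3, 0, 0, 0, -1/3] : Fin 6 → ℝ) - fun i => (v i : ℝ)) ⬝ᵥ
      (QE6 *ᵥ ((![-1/3, -1/3, 0, 0, 0, -1/3] : Fin 6 → ℝ) - fun i => (v i : ℝ))) := by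
  let N : ℤ → ℤ → ℤ := fun x y => x ^ 2 + x * y + y ^ 2
  have hN : ∀ x y, N x y ≤ 0 → x = 0 ∧ y = 0 := by
    intro x y h
    have h' : eNorm x y ≤ 0 := by unfold eNorm; exact_mod_cast h
    exact_mod_cast eNorm_eq_zero h'
  have hN0 : ∀ x y, 0 ≤ N x y := by
    intro x y
    have h := eNorm_nonneg x y
    unfold eNorm at h
    exact_mod_cast h
  let S : ℤ := N (1 + v 0 + v 1 + v 2 + v 3 + v 4 + v 5) (-v 4)
    + N (v 0 - v 4 - v 5) (-v 0 + v 1 + v 4) + N (v 2) (-v 2 + v 3)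
  have hS : 1 ≤ S := by
    by_contra! h
    have t1 := hN0 (1 + v 0 + v 1 + v 2 + v 3 + v 4 + v 5) (-v 4)
    have t2 := hN0 (v 0 - v 4 - v 5) (-v 0 + v 1 + v 4)
    have t3 := hN0 (v 2) (-v 2 + v 3)
    have u1 := hN (1 + v 0 + v 1 + v 2 + v 3 + v 4 + v 5) (-v 4) (by omega)
    have u2 := hN (v 0 - v 4 - v 5) (-v 0 + v 1 + v 4) (by omega)
    have u3 := hN (v 2) (-v 2 + v 3) (by omega)
    omega
  have hS' : (1 : ℝ) ≤ S := by exact_mod_cast hS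
  refine le_trans (by linarith : (2 : ℝ) ≤ 2 * S) (le_of_eq ?_)
  rw [QE6_form]
  simp [S, N, eNorm]
  ring

lemma QE6_inhomMin : inhomMin QE6 = 2 := by
  have hbdd : ∀ x : Fin 6 → ℝ, BddBelow (Set.range fun v : Fin 6 → ℤ =>
      (x - fun i => (v i : ℝ)) ⬝ᵥ (QE6 *ᵥ (x - fun i => (v i : ℝ)))) := by
    intro x
    refine ⟨0, ?_⟩
    rintro _ ⟨v, rfl⟩
    simpa using QE6_posDef.posSemidef.dotProduct_mulVec_nonneg (x - fun i => (v i : ℝ))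
  have hle : ∀ x : Fin 6 → ℝ, (⨅ v : Fin 6 → ℤ,
      (x - fun i => (v i : ℝ)) ⬝ᵥ (QE6 *ᵥ (x - fun i => (v i : ℝ)))) ≤ 2 := by
    intro x
    obtain ⟨v, hv⟩ := QE6_covering x
    exact (ciInf_le (hbdd x) v).trans hv
  refine le_antisymm (ciSup_le hle) ?_
  refine le_trans (le_ciInf QE6_deep_hole) (le_ciSup (f := fun x : Fin 6 → ℝ => ⨅ v : Fin 6 → ℤ,
      (x - fun i => (v i : ℝ)) ⬝ᵥ (QE6 *ᵥ (x - fun i => (v i : ℝ)))) ⟨2, ?_⟩ _)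
  rintro _ ⟨x, rfl⟩
  exact hle x

/-- The matrix `Q_{E6*}` is positive definite with determinant `243` and inhomogeneous
minimum `2`; consequently its covering density is `(8/(9·√3))·κ₆`, i.e.
`μ(Q_{E6*})⁶ / det Q_{E6*} = 64/243`. -/
theorem QE6_det_inhomMin_covDensity :
    QE6.PosDef ∧ QE6.det = 243 ∧ inhomMin QE6 = 2 ∧
    covDensity QE6 = 8 / (9 * Real.sqrt 3) * unitBallVol 6 ∧
    inhomMin QE6 ^ 6 / QE6.det = 64 / 243 := by
  have hq : inhomMin QE6 ^ 6 / QE6.det = 64 / 243 := by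
    rw [QE6_inhomMin, QE6_det]; norm_num
  refine ⟨QE6_posDef, QE6_det, QE6_inhomMin, ?_, hq⟩
  have h3 : Real.sqrt 3 ^ 2 = 3 := Real.sq_sqrt (by norm_num)
  have hs : Real.sqrt (64 / 243) = 8 / (9 * Real.sqrt 3) := by
    rw [Real.sqrt_eq_iff_mul_self_eq (by norm_num) (by positivity)]
    field_simp
    nlinarith
  rw [covDensity, hq, hs]
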